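/- arXiv:1011.1757 — 7 statements merged into one kernel-verified Lean document; each statement's English description precedes it below -/
import Mathlib

section
/- Let ψ : ℝ^m → ℝ^p be differentiable at a point x with ψ(x) ≠ 0, and let θ(y) = ‖ψ(y)‖⁻¹ • ψ(y). If the sphere centered at 0 through x is transverse at x to the fiber of ψ, i.e. there exists v ∈ ker Dψ(x) with ⟪v, x⟫ ≠ 0, then the same sphere is transverse at x to the fiber of ψ/‖ψ‖, i.e. there exists v' ∈ ker Dθ(x) with ⟪v', x⟫ ≠ 0. (This expresses the inclusion M(ψ/‖ψ‖) \ V ⊆ M(ψ) \ V of the sets of ρ-nonregular points.) -/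
open scoped RealInnerProductSpace

/-! Radial projection onto the unit sphere is differentiable wherever the norm is, so `D(ψ/‖ψ‖)(x)`
factors through `Dψ(x)` by the chain rule. The fiber of `ψ/‖ψ‖` thus has at least the tangent
directions of the fiber of `ψ`, and a direction transverse to the sphere remains one. -/

section ChainRule

variable {𝕜 E F G : Type*} [NontriviallyNormedField 𝕜]
  [NormedAddCommGroup E] [NormedSpace 𝕜 E] [NormedAddCommGroup F] [NormedSpace 𝕜 F]
  [NormedAddCommGroup G] [NormedSpace 𝕜 G]

theorem fderiv_comp_apply_eq_zero {g : F → G} {f : E → F} {x v : E}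
    (hg : DifferentiableAt 𝕜 g (f x)) (hf : DifferentiableAt 𝕜 f x)
    (hv : fderiv 𝕜 f x v = 0) : fderiv 𝕜 (g ∘ f) x v = 0 := by
  rw [fderiv_comp x hg hf, ContinuousLinearMap.comp_apply, hv, map_zero]

end ChainRule

section Normalize

variable {F : Type*} [NormedAddCommGroup F] [NormedSpace ℝ F]

theorem differentiableAt_normalize {z : F} (hnorm : DifferentiableAt ℝ (‖·‖) z) :
    DifferentiableAt ℝ (NormedSpace.normalize : F → F) z := by
  rcases subsingleton_or_nontrivial F with _ | _
  · exact differentiable_of_subsingleton.differentiableAt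
  · have hz : z ≠ 0 := by
      rintro rfl
      exact not_differentiableAt_norm_zero F hnorm
    exact (hnorm.fun_inv (norm_ne_zero_iff.mpr hz)).fun_smul differentiableAt_fun_id

theorem transverse_fiber_normalized_of_transverse_fiber_general
    {E : Type*} [NormedAddCommGroup E] [InnerProductSpace ℝ E] {ψ : E → F} {x : E}
    (hdiff : DifferentiableAt ℝ ψ x) (hnorm : DifferentiableAt ℝ (‖·‖) (ψ x))
    (h : ∃ v : E, fderiv ℝ ψ x v = 0 ∧ ⟪v, x⟫ ≠ 0) :
    ∃ v' : E, fderiv ℝ (fun y => ‖ψ y‖⁻¹ • ψ y) x v' = 0 ∧ ⟪v', x⟫ ≠ 0 := by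
  obtain ⟨v, hv, hvx⟩ := h
  have hθv : fderiv ℝ (NormedSpace.normalize ∘ ψ) x v = 0 :=
    fderiv_comp_apply_eq_zero (differentiableAt_normalize hnorm) hdiff hv
  exact ⟨v, hθv, hvx⟩

end Normalize

/-- If the sphere through `x` centered at `0` is transverse at `x` to the fiber of `ψ`
(there is `v ∈ ker Dψ(x)` with `⟪v, x⟫ ≠ 0`), then it is also transverse at `x` to the
fiber of `θ = ψ/‖ψ‖`.  This expresses `M(ψ/‖ψ‖) \ V ⊆ M(ψ) \ V`. -/
theorem transverse_fiber_normalized_of_transverse_fiber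
    (m p : ℕ) (ψ : EuclideanSpace ℝ (Fin m) → EuclideanSpace ℝ (Fin p))
    (x : EuclideanSpace ℝ (Fin m)) (hdiff : DifferentiableAt ℝ ψ x) (hx : ψ x ≠ 0)
    (h : ∃ v : EuclideanSpace ℝ (Fin m), fderiv ℝ ψ x v = 0 ∧ ⟪v, x⟫ ≠ 0) :
    ∃ v' : EuclideanSpace ℝ (Fin m),
      fderiv ℝ (fun y => ‖ψ y‖⁻¹ • ψ y) x v' = 0 ∧ ⟪v', x⟫ ≠ 0 := by
  exact transverse_fiber_normalized_of_transverse_fiber_general hdiff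
    (differentiableAt_id.norm ℝ hx) h
end

section
/- (Example 1.7, singular locus.) Let f : ℂ³ → ℂ, f(x,y,z) = conj(x)·y² + x·conj(z)². Then the singular set of f, namely Sing f = {(x,y,z) ∈ ℂ³ : the real Fréchet derivative Df(x,y,z) : ℂ³ → ℂ is not surjective}, equals {(x,y,z) : y = 0 ∧ z = 0} ∪ {(x,y,z) : x = 0 ∧ ∃ λ ∈ ℂ, |λ| = 1 ∧ y = λ·z}; in particular Sing f ⊆ f⁻¹(0), and Sing f is not contained in {0} (f has nonisolated singularity). -/
/-!
Split a real-linear map `L : E → ℂ` as `L v = A v + conj (B v)` with `A`, `B` complex linear. If `L`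
is not surjective then its range is orthogonal to some `w ≠ 0`, that is,
`Re ((conj w • A + w • B) v) = 0` for all `v`; a complex-linear form with vanishing real part is
zero, so `B = l • A` with `l = -conj w / w` of modulus one. Conversely `B = l • A` forces
`conj c = l * c` on the range of `L`, which is therefore at most a real line.

For `f = x̄y² + xz̄²` the components of `B = l • A` read `ȳ² = l z̄²`, `x̄y = 0` and `x̄z = 0`.
-/

open ComplexConjugate

theorem exists_ne_zero_forall_inner_eq_zero_of_not_surjective {𝕜 E F : Type*} [RCLike 𝕜]
    [AddCommGroup E] [Module 𝕜 E] [NormedAddCommGroup F] [InnerProductSpace 𝕜 F]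
    {L : E →ₗ[𝕜] F} [(LinearMap.range L).HasOrthogonalProjection] (hL : ¬ Function.Surjective L) :
    ∃ w : F, w ≠ 0 ∧ ∀ v, inner 𝕜 w (L v) = 0 := by
  have hrange : (LinearMap.range L)ᗮ ≠ ⊥ := by
    rwa [Ne, Submodule.orthogonal_eq_bot_iff, LinearMap.range_eq_top]
  obtain ⟨w, hw, hw0⟩ := Submodule.exists_mem_ne_zero_of_ne_bot hrange
  exact ⟨w, hw0, fun v => (Submodule.mem_orthogonal' _ _).1 hw _ (L.mem_range_self v)⟩

theorem norm_eq_norm_iff_exists_eq_mul {𝕜 : Type*} [NormedDivisionRing 𝕜] {a b : 𝕜} :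
    ‖a‖ = ‖b‖ ↔ ∃ l : 𝕜, ‖l‖ = 1 ∧ a = l * b := by
  constructor
  · intro h
    rcases eq_or_ne b 0 with rfl | hb
    · exact ⟨1, norm_one, by simpa using h⟩
    · exact ⟨a / b, by rw [norm_div, h, div_self (norm_ne_zero_iff.2 hb)],
        (div_mul_cancel₀ a hb).symm⟩
  · rintro ⟨l, hl, rfl⟩
    rw [norm_mul, hl, one_mul]

section Wirtinger

variable {E : Type*} [AddCommGroup E] [Module ℂ E]

theorem linearMap_eq_zero_of_forall_re_eq_zero {φ : E →ₗ[ℂ] ℂ} (hφ : ∀ v, (φ v).re = 0) :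
    φ = 0 := by
  ext v
  have him : (φ v).im = 0 := by simpa using hφ (Complex.I • v)
  exact Complex.ext (hφ v) him

variable [Module ℝ E] [IsScalarTower ℝ ℂ E]

/-- The real-linear map with complex-linear part `A` and complex-antilinear part `conj ∘ B`. For a
differential `Df` these are the forms `∂f` and `∂̄f` of Wirtinger calculus; the antilinear part is
encoded by its conjugate `B`, so that both arguments are complex linear. -/
noncomputable def wirtingerLinearMap (A B : E →ₗ[ℂ] ℂ) : E →ₗ[ℝ] ℂ :=
  A.restrictScalars ℝ + Complex.conjAe.toLinearMap ∘ₗ B.restrictScalars ℝ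

theorem wirtingerLinearMap_apply (A B : E →ₗ[ℂ] ℂ) (v : E) :
    wirtingerLinearMap A B v = A v + conj (B v) := rfl

theorem inner_wirtingerLinearMap (A B : E →ₗ[ℂ] ℂ) (w : ℂ) (v : E) :
    inner ℝ w (wirtingerLinearMap A B v) = ((conj w • A + w • B) v).re := by
  simp only [wirtingerLinearMap_apply, Complex.inner, LinearMap.add_apply, LinearMap.smul_apply,
    smul_eq_mul, Complex.mul_re, Complex.add_re, Complex.add_im, Complex.conj_re, Complex.conj_im]
  ring

theorem exists_eq_smul_of_not_surjective_wirtingerLinearMap {A B : E →ₗ[ℂ] ℂ}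
    (h : ¬ Function.Surjective (wirtingerLinearMap A B)) : ∃ l : ℂ, ‖l‖ = 1 ∧ B = l • A := by
  obtain ⟨w, hw, horth⟩ := exists_ne_zero_forall_inner_eq_zero_of_not_surjective h
  have hdep : conj w • A + w • B = 0 :=
    linearMap_eq_zero_of_forall_re_eq_zero fun v => inner_wirtingerLinearMap A B w v ▸ horth v
  refine ⟨-conj w / w, by simp [hw], ?_⟩
  rw [div_eq_inv_mul, mul_smul, eq_inv_smul_iff₀ hw, neg_smul]
  exact eq_neg_of_add_eq_zero_right hdep

theorem conj_wirtingerLinearMap_smul {l : ℂ} (hl : ‖l‖ = 1) (A : E →ₗ[ℂ] ℂ) (v : E) :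
    conj (wirtingerLinearMap A (l • A) v) = l * wirtingerLinearMap A (l • A) v := by
  have hll : l * conj l = 1 := by simp [Complex.mul_conj', hl]
  simp only [wirtingerLinearMap_apply, LinearMap.smul_apply, smul_eq_mul, map_add, map_mul,
    Complex.conj_conj]
  linear_combination -conj (A v) * hll

theorem not_surjective_wirtingerLinearMap_iff (A B : E →ₗ[ℂ] ℂ) :
    ¬ Function.Surjective (wirtingerLinearMap A B) ↔ ∃ l : ℂ, ‖l‖ = 1 ∧ B = l • A := by
  refine ⟨exists_eq_smul_of_not_surjective_wirtingerLinearMap, ?_⟩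
  rintro ⟨l, hl, rfl⟩ hsurj
  have hconj (c : ℂ) : conj c = l * c := by
    obtain ⟨v, rfl⟩ := hsurj c
    exact conj_wirtingerLinearMap_smul hl A v
  have hl1 : l = 1 := by simpa using (hconj 1).symm
  simpa [hl1, neg_eq_self] using hconj Complex.I

end Wirtinger

/-- The mixed polynomial `x̄y² + xz̄²` of the theorem. -/
def mixedCubic (p : ℂ × ℂ × ℂ) : ℂ := conj p.1 * p.2.1 ^ 2 + p.1 * conj p.2.2 ^ 2

/-- The complex-linear part `∂f = z̄² dx + 2x̄y dy` of the differential of `mixedCubic`. -/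
def mixedCubicLinearPart (p : ℂ × ℂ × ℂ) : ℂ × ℂ × ℂ →ₗ[ℂ] ℂ :=
  .coprod (.toSpanSingleton ℂ ℂ (conj p.2.2 ^ 2))
    (.coprod (.toSpanSingleton ℂ ℂ (2 * conj p.1 * p.2.1)) 0)

/-- The form `ȳ² dx + 2x̄z dz`, whose conjugate is the antilinear part `∂̄f = y² dx̄ + 2xz̄ dz̄` of
the differential of `mixedCubic`. -/
def mixedCubicConjAntilinearPart (p : ℂ × ℂ × ℂ) : ℂ × ℂ × ℂ →ₗ[ℂ] ℂ :=
  .coprod (.toSpanSingleton ℂ ℂ (conj p.2.1 ^ 2))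
    (.coprod 0 (.toSpanSingleton ℂ ℂ (2 * conj p.1 * p.2.2)))

theorem hasFDerivAt_mixedCubic (p : ℂ × ℂ × ℂ) :
    HasFDerivAt mixedCubic (wirtingerLinearMap (mixedCubicLinearPart p)
      (mixedCubicConjAntilinearPart p)).toContinuousLinearMap p := by
  have hx : HasFDerivAt (𝕜 := ℝ) (fun q : ℂ × ℂ × ℂ => q.1) _ p := hasFDerivAt_fst
  have hyz : HasFDerivAt (𝕜 := ℝ) (fun q : ℂ × ℂ × ℂ => q.2) _ p := hasFDerivAt_snd
  have hf := (hx.star.mul (hyz.fst.pow 2)).add (hx.mul (hyz.snd.star.pow 2))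
  refine hf.congr_fderiv (ContinuousLinearMap.ext fun v => ?_)
  simp only [RCLike.star_def, Nat.add_one_sub_one, pow_one, nsmul_eq_mul, Nat.cast_ofNat,
    add_apply, smul_apply, smul_eq_mul, ContinuousLinearMap.comp_apply,
    ContinuousLinearMap.coe_fst', ContinuousLinearMap.coe_snd', ContinuousLinearEquiv.coe_coe,
    starL'_apply, LinearMap.coe_toContinuousLinearMap', wirtingerLinearMap_apply,
    mixedCubicLinearPart, mixedCubicConjAntilinearPart, LinearMap.coprod_apply,
    LinearMap.toSpanSingleton_apply, LinearMap.zero_apply, add_zero, zero_add, map_add, map_mul,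
    map_pow, map_ofNat, Complex.conj_conj]
  ring

theorem mixedCubicConjAntilinearPart_eq_smul_iff {l : ℂ} (hl : l ≠ 0) (p : ℂ × ℂ × ℂ) :
    mixedCubicConjAntilinearPart p = l • mixedCubicLinearPart p ↔
      conj p.2.1 ^ 2 = l * conj p.2.2 ^ 2 ∧ (p.1 = 0 ∨ p.2.1 = 0 ∧ p.2.2 = 0) := by
  rw [or_and_left]
  simp [mixedCubicLinearPart, mixedCubicConjAntilinearPart, LinearMap.prod_ext_iff,
    LinearMap.ext_ring_iff, hl]

theorem not_surjective_fderiv_mixedCubic_iff (p : ℂ × ℂ × ℂ) :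
    ¬ Function.Surjective (fderiv ℝ mixedCubic p) ↔
      (p.2.1 = 0 ∧ p.2.2 = 0) ∨ (p.1 = 0 ∧ ‖p.2.1‖ = ‖p.2.2‖) := by
  have hnorm : ‖p.2.1‖ = ‖p.2.2‖ ↔ ∃ l : ℂ, ‖l‖ = 1 ∧ conj p.2.1 ^ 2 = l * conj p.2.2 ^ 2 := by
    rw [← norm_eq_norm_iff_exists_eq_mul]
    simp
  rw [(hasFDerivAt_mixedCubic p).fderiv, LinearMap.coe_toContinuousLinearMap',
    not_surjective_wirtingerLinearMap_iff, hnorm]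
  constructor
  · rintro ⟨l, hl, hsmul⟩
    have hl0 : l ≠ 0 := norm_ne_zero_iff.1 (hl ▸ one_ne_zero)
    obtain ⟨hyz, hx | hyz0⟩ := (mixedCubicConjAntilinearPart_eq_smul_iff hl0 p).1 hsmul
    · exact .inr ⟨hx, l, hl, hyz⟩
    · exact .inl hyz0
  · rintro (⟨hy, hz⟩ | ⟨hx, l, hl, hyz⟩)
    · exact ⟨1, norm_one, (mixedCubicConjAntilinearPart_eq_smul_iff one_ne_zero p).2
        ⟨by simp [hy, hz], .inr ⟨hy, hz⟩⟩⟩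
    · have hl0 : l ≠ 0 := norm_ne_zero_iff.1 (hl ▸ one_ne_zero)
      exact ⟨l, hl, (mixedCubicConjAntilinearPart_eq_smul_iff hl0 p).2 ⟨hyz, .inl hx⟩⟩

/-- Example 1.7, singular locus: for `f(x,y,z) = x̄·y² + x·z̄²` on `ℂ³`, the singular set
`Sing f = {p : Df(p) not surjective}` equals
`{y = z = 0} ∪ {x = 0, y = λz, |λ| = 1}`; in particular `Sing f ⊆ f⁻¹(0)` and `Sing f`
is not contained in `{0}` (nonisolated singularity). -/
theorem example_mixed_function_singular_locus
    (f : ℂ × ℂ × ℂ → ℂ)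
    (hf : ∀ p : ℂ × ℂ × ℂ,
      f p = (starRingEnd ℂ) p.1 * p.2.1 ^ 2 + p.1 * ((starRingEnd ℂ) p.2.2) ^ 2) :
    {p : ℂ × ℂ × ℂ | ¬ Function.Surjective ⇑(fderiv ℝ f p)} =
        ({p : ℂ × ℂ × ℂ | p.2.1 = 0 ∧ p.2.2 = 0} ∪
          {p : ℂ × ℂ × ℂ | p.1 = 0 ∧ ∃ l : ℂ, ‖l‖ = 1 ∧ p.2.1 = l * p.2.2}) ∧
      {p : ℂ × ℂ × ℂ | ¬ Function.Surjective ⇑(fderiv ℝ f p)} ⊆ f ⁻¹' {0} ∧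
      ¬ ({p : ℂ × ℂ × ℂ | ¬ Function.Surjective ⇑(fderiv ℝ f p)} ⊆ {0}) := by
  obtain rfl : f = mixedCubic := funext hf
  have hsing : {p : ℂ × ℂ × ℂ | ¬ Function.Surjective (fderiv ℝ mixedCubic p)} =
      {p | p.2.1 = 0 ∧ p.2.2 = 0} ∪ {p | p.1 = 0 ∧ ∃ l : ℂ, ‖l‖ = 1 ∧ p.2.1 = l * p.2.2} := by
    ext p
    rw [Set.mem_ofPred_eq, not_surjective_fderiv_mixedCubic_iff, norm_eq_norm_iff_exists_eq_mul]
    rfl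
  rw [hsing]
  refine ⟨rfl, ?_, fun hsub => ?_⟩
  · rintro p (⟨hy, hz⟩ | ⟨hx, -⟩)
    · simp [mixedCubic, hy, hz]
    · simp [mixedCubic, hx]
  · have hmem : ((1, 0, 0) : ℂ × ℂ × ℂ) ∈ ({0} : Set (ℂ × ℂ × ℂ)) := hsub (.inl ⟨rfl, rfl⟩)
    simp at hmem
end

section
/- (Example 4.1, singular locus.) Let f : ℝ³ → ℝ², f(x,y,z) = (y⁴ − z²·x² − x⁴, x·y). Then Sing f = {(x,y,z) ∈ ℝ³ : x = 0 ∧ y = 0}, where Sing f := {p ∈ ℝ³ : the real Fréchet derivative Df(p) : ℝ³ → ℝ² is not surjective}; in particular Sing f = f⁻¹(0). -/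
/-!
Writing `g` for the first component of `f`, the `(x, y)`-minor of the Jacobian matrix is
`x ∂g/∂x - y ∂g/∂y`, the derivative of `g` along the hyperbolic flow `(eᵗ x, e⁻ᵗ y, z)`, which
preserves the second component `xy`. It equals `-(4x⁴ + 4y⁴ + 2x²z²)`, a sum of even monomials that
vanishes only on the `z`-axis. On the `z`-axis itself the row `∇(xy) = (y, x, 0)` is zero.
-/

theorem surjective_iff_exists_isUnit_basis_det {R M N ι : Type*} [CommRing R]
    [AddCommMonoid M] [Module R M] [AddCommGroup N] [Module R N] [Fintype ι] [DecidableEq ι]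
    (b : Module.Basis ι R N) (L : M →ₗ[R] N) :
    Function.Surjective L ↔ ∃ v : ι → M, IsUnit (b.det (L ∘ v)) := by
  constructor
  · intro hL
    choose v hv using fun i => hL (b i)
    exact ⟨v, by simp [show L ∘ v = b from funext hv, b.det_self]⟩
  · rintro ⟨v, hv⟩
    have hspan : Submodule.span R (Set.range (L ∘ v)) = ⊤ :=
      ((Module.Basis.is_basis_iff_det b).2 hv).2
    have hle : Submodule.span R (Set.range (L ∘ v)) ≤ L.range :=
      Submodule.span_le.2 (Set.range_comp_subset_range v L)
    exact LinearMap.range_eq_top.1 (top_le_iff.1 (hspan ▸ hle))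

theorem surjective_iff_exists_isUnit_minor {R M : Type*} [CommRing R]
    [AddCommMonoid M] [Module R M] (L : M →ₗ[R] R × R) :
    Function.Surjective L ↔
      ∃ u v : M, IsUnit ((L u).1 * (L v).2 - (L v).1 * (L u).2) := by
  simp [surjective_iff_exists_isUnit_basis_det (Module.Basis.finTwoProd R), Fin.exists_fin_succ_pi,
    Module.Basis.det_apply, Matrix.det_fin_two, Module.Basis.toMatrix_apply]

/-- The polynomial mapping `(x, y, z) ↦ (y⁴ - z²x² - x⁴, xy)` over an arbitrary commutative ring. -/
def quarticProdMap {R : Type*} [CommRing R] (p : R × R × R) : R × R :=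
  (p.2.1 ^ 4 - p.2.2 ^ 2 * p.1 ^ 2 - p.1 ^ 4, p.1 * p.2.1)

theorem fderiv_quarticProdMap_apply {𝕜 : Type*} [NontriviallyNormedField 𝕜] (p v : 𝕜 × 𝕜 × 𝕜) :
    fderiv 𝕜 quarticProdMap p v =
      ((-2 * p.1 * p.2.2 ^ 2 - 4 * p.1 ^ 3) * v.1 + 4 * p.2.1 ^ 3 * v.2.1
        - 2 * p.2.2 * p.1 ^ 2 * v.2.2, p.2.1 * v.1 + p.1 * v.2.1) := by
  have hx : HasFDerivAt (fun q : 𝕜 × 𝕜 × 𝕜 => q.1)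
      (ContinuousLinearMap.fst 𝕜 𝕜 (𝕜 × 𝕜)) p := hasFDerivAt_fst
  have hyz : HasFDerivAt (fun q : 𝕜 × 𝕜 × 𝕜 => q.2)
      (ContinuousLinearMap.snd 𝕜 𝕜 (𝕜 × 𝕜)) p := hasFDerivAt_snd
  have hf : HasFDerivAt quarticProdMap _ p :=
    (((hyz.fst.pow 4).sub ((hyz.snd.pow 2).mul (hx.pow 2))).sub (hx.pow 4)).prodMk
      (hx.mul hyz.fst)
  rw [hf.fderiv]
  ext <;> simp <;> ring

theorem fderiv_quarticProdMap_minor_eq_zero_iff (p : ℝ × ℝ × ℝ) :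
    (fderiv ℝ quarticProdMap p (1, 0, 0)).1 * (fderiv ℝ quarticProdMap p (0, 1, 0)).2 -
        (fderiv ℝ quarticProdMap p (0, 1, 0)).1 * (fderiv ℝ quarticProdMap p (1, 0, 0)).2 = 0 ↔
      p.1 = 0 ∧ p.2.1 = 0 := by
  obtain ⟨x, y, z⟩ := p
  simp only [fderiv_quarticProdMap_apply]
  constructor
  · intro h
    have hsum : 4 * x ^ 4 + 4 * y ^ 4 + 2 * (x ^ 2 * z ^ 2) = 0 := by linear_combination -h
    have hx : 0 ≤ x ^ 4 := by positivity
    have hy : 0 ≤ y ^ 4 := by positivity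
    have hxz : 0 ≤ x ^ 2 * z ^ 2 := by positivity
    exact ⟨pow_eq_zero_iff four_ne_zero |>.1 (by linarith only [hsum, hx, hy, hxz]),
      pow_eq_zero_iff four_ne_zero |>.1 (by linarith only [hsum, hx, hy, hxz])⟩
  · rintro ⟨rfl, rfl⟩
    simp

theorem not_surjective_fderiv_quarticProdMap_iff (p : ℝ × ℝ × ℝ) :
    ¬ Function.Surjective (fderiv ℝ quarticProdMap p) ↔ p.1 = 0 ∧ p.2.1 = 0 := by
  have hsurj := surjective_iff_exists_isUnit_minor (fderiv ℝ quarticProdMap p).toLinearMap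
  simp only [ContinuousLinearMap.coe_coe, isUnit_iff_ne_zero] at hsurj
  rw [hsurj]
  constructor
  · intro h
    rw [← fderiv_quarticProdMap_minor_eq_zero_iff]
    by_contra hminor
    exact h ⟨(1, 0, 0), (0, 1, 0), hminor⟩
  · rintro ⟨hx, hy⟩
    simp [fderiv_quarticProdMap_apply, hx, hy]

theorem quarticProdMap_eq_zero_iff {R : Type*} [CommRing R] [LinearOrder R]
    [IsStrictOrderedRing R] (p : R × R × R) :
    quarticProdMap p = 0 ↔ p.1 = 0 ∧ p.2.1 = 0 := by
  obtain ⟨x, y, z⟩ := p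
  simp only [quarticProdMap, Prod.mk_eq_zero]
  constructor
  · rintro ⟨hg, hxy⟩
    rcases mul_eq_zero.1 hxy with rfl | rfl
    · simpa using hg
    · have hxz : 0 ≤ z ^ 2 * x ^ 2 := by positivity
      have hx : 0 ≤ x ^ 4 := by positivity
      exact ⟨pow_eq_zero_iff four_ne_zero |>.1 (by linarith), rfl⟩
  · rintro ⟨rfl, rfl⟩
    simp

/-- Example 4.1, singular locus: for `f(x,y,z) = (y⁴ − z²x² − x⁴, xy)` the singular set
`Sing f = {p : Df(p) not surjective}` equals the `z`-axis `{x = y = 0}`; in particular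
`Sing f = f⁻¹(0)`. -/
theorem example_real_mapping_singular_locus
    (f : ℝ × ℝ × ℝ → ℝ × ℝ)
    (hf : ∀ p : ℝ × ℝ × ℝ,
      f p = (p.2.1 ^ 4 - p.2.2 ^ 2 * p.1 ^ 2 - p.1 ^ 4, p.1 * p.2.1)) :
    {p : ℝ × ℝ × ℝ | ¬ Function.Surjective ⇑(fderiv ℝ f p)} =
        {p : ℝ × ℝ × ℝ | p.1 = 0 ∧ p.2.1 = 0} ∧
      {p : ℝ × ℝ × ℝ | ¬ Function.Surjective ⇑(fderiv ℝ f p)} = f ⁻¹' {0} := by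
  obtain rfl : f = quarticProdMap := funext hf
  have hsing : {p : ℝ × ℝ × ℝ | ¬ Function.Surjective ⇑(fderiv ℝ quarticProdMap p)} =
      {p : ℝ × ℝ × ℝ | p.1 = 0 ∧ p.2.1 = 0} :=
    Set.ext not_surjective_fderiv_quarticProdMap_iff
  have hzero : quarticProdMap ⁻¹' {0} = {p : ℝ × ℝ × ℝ | p.1 = 0 ∧ p.2.1 = 0} :=
    Set.ext quarticProdMap_eq_zero_iff
  exact ⟨hsing, hsing.trans hzero.symm⟩
end

section
/- (Example 4.1, Milnor set condition.) Let f : ℝ³ → ℝ², f(x,y,z) = (y⁴ − z²·x² − x⁴, x·y), with V = f⁻¹(0) = {x = y = 0}. Let M denote the set of points (x,y,z) ∈ ℝ³ with (x,y) ≠ (0,0) at which the position vector lies in the span of the gradients of the components of f, i.e. ∃ a, b ∈ ℝ such that (x, y, z) = a•(−2xz² − 4x³, 4y³, −2zx²) + b•(y, x, 0). Then closure(M) ∩ V ⊆ {(0,0,0)}; that is, the closure of M(f) \ V meets V at most in the origin. -/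
/-!
The vector field `w = (-x³z, x²yz, x²z² + 2x⁴ + 2y⁴)`, a multiple of `∇f₁ × ∇f₂`, is tangent to the
fibers of `f`, so pairing it with a position vector in the span of the gradients gives
`z * (x² * (x² + y² + z²) + 2y⁴) = 0`. Away from `V` the second factor is positive, so
`M(f) \ V` lies in the closed plane `z = 0`, which meets `V` only at the origin.
-/

namespace RealMappingExample

section CommRing

variable {K : Type*} [CommRing K]

/-- The gradient `∇f₁` of the first component `y⁴ - z²x² - x⁴` of `f`, given by its formula so that
it makes sense over any commutative ring. -/
def gradFst (p : K × K × K) : K × K × K :=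
  (-2 * p.1 * p.2.2 ^ 2 - 4 * p.1 ^ 3, 4 * p.2.1 ^ 3, -2 * p.2.2 * p.1 ^ 2)

/-- The gradient `∇f₂` of the second component `xy` of `f`, given by its formula so that it makes
sense over any commutative ring. -/
def gradSnd (p : K × K × K) : K × K × K := (p.2.1, p.1, 0)

variable (K) in
/-- The zero fiber `V = f⁻¹(0, 0)`, encoded as the `z`-axis. -/
def zeroFiber : Set (K × K × K) := {p | p.1 = 0 ∧ p.2.1 = 0}

variable (K) in
/-- The set `M(f) \ V` of ρ-nonregular points of `f` outside the zero fiber: the position vector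
lies in the span of the two gradients. -/
def nonregularSet : Set (K × K × K) :=
  {p | (p.1, p.2.1) ≠ (0, 0) ∧ ∃ a b : K, p = a • gradFst p + b • gradSnd p}

theorem mul_eq_zero_of_eq_smul_gradFst_add_smul_gradSnd {x y z a b : K}
    (h : (x, y, z) = a • gradFst (x, y, z) + b • gradSnd (x, y, z)) :
    z * (x ^ 2 * (x ^ 2 + y ^ 2 + z ^ 2) + 2 * y ^ 4) = 0 := by
  simp only [gradFst, gradSnd, Prod.smul_mk, Prod.mk_add_mk, Prod.mk.injEq, smul_eq_mul] at h
  obtain ⟨hx, hy, hz⟩ := h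
  -- The coefficients are the coordinates of the tangent field `w`.
  linear_combination
    (-x ^ 3 * z) * hx + (x ^ 2 * y * z) * hy + (x ^ 2 * z ^ 2 + 2 * x ^ 4 + 2 * y ^ 4) * hz

end CommRing

section LinearOrder

variable {K : Type*} [CommRing K] [LinearOrder K] [IsStrictOrderedRing K]

theorem sq_mul_add_two_mul_pow_four_pos {x y : K} (hxy : (x, y) ≠ (0, 0)) (z : K) :
    0 < x ^ 2 * (x ^ 2 + y ^ 2 + z ^ 2) + 2 * y ^ 4 := by
  obtain rfl | hx := eq_or_ne x 0
  · have hy : y ≠ 0 := by rintro rfl; exact hxy rfl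
    positivity
  · positivity

variable (K) in
theorem nonregularSet_subset_plane : nonregularSet K ⊆ {p | p.2.2 = 0} := by
  rintro ⟨x, y, z⟩ ⟨hxy, a, b, hspan⟩
  exact (mul_eq_zero.mp (mul_eq_zero_of_eq_smul_gradFst_add_smul_gradSnd hspan)).resolve_right
    (sq_mul_add_two_mul_pow_four_pos hxy z).ne'

end LinearOrder

end RealMappingExample

open RealMappingExample in
theorem example_real_mapping_milnor_set_condition_general
    (K : Type*) [CommRing K] [LinearOrder K] [IsStrictOrderedRing K]
    [TopologicalSpace K] [T1Space K] :
    closure (nonregularSet K) ∩ zeroFiber K ⊆ {(0, 0, 0)} := by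
  have hplane : IsClosed {p : K × K × K | p.2.2 = 0} :=
    isClosed_singleton.preimage (continuous_snd.comp continuous_snd)
  rintro ⟨x, y, z⟩ ⟨hclosure, hx, hy⟩
  have hz : z = 0 := closure_minimal (nonregularSet_subset_plane K) hplane hclosure
  exact Prod.ext hx (Prod.ext hy hz)

/-- Example 4.1, Milnor set condition: for `f(x,y,z) = (y⁴ − z²x² − x⁴, xy)` with
`V = {x = y = 0}`, the set `M` of points outside `V` where the position vector lies in
the span of the gradients `∇f₁, ∇f₂` satisfies `closure M ∩ V ⊆ {0}`. -/
theorem example_real_mapping_milnor_set_condition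
    (M V : Set (ℝ × ℝ × ℝ))
    (hM : M = {p : ℝ × ℝ × ℝ | (p.1, p.2.1) ≠ (0, 0) ∧ ∃ a b : ℝ,
      p = a • ((-2 * p.1 * p.2.2 ^ 2 - 4 * p.1 ^ 3, 4 * p.2.1 ^ 3,
            -2 * p.2.2 * p.1 ^ 2) : ℝ × ℝ × ℝ)
          + b • ((p.2.1, p.1, 0) : ℝ × ℝ × ℝ)})
    (hV : V = {p : ℝ × ℝ × ℝ | p.1 = 0 ∧ p.2.1 = 0}) :
    closure M ∩ V ⊆ {(0, 0, 0)} := by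
  subst hM hV
  exact example_real_mapping_milnor_set_condition_general ℝ
end

section
/- (Proposition 4.2, singular locus of a Thom–Sebastiani sum.) Let ψ : ℝ^m → ℝ^p and φ : ℝ^n → ℝ^p be differentiable mappings such that Sing ψ ⊆ ψ⁻¹(0) and Sing φ ⊆ φ⁻¹(0), i.e. Dψ(x) is surjective whenever ψ(x) ≠ 0 and Dφ(y) is surjective whenever φ(y) ≠ 0. Define h : ℝ^m × ℝ^n → ℝ^p by h(x,y) = ψ(x) + φ(y). Then Sing h ⊆ h⁻¹(0): whenever the real Fréchet derivative Dh(x,y) : ℝ^m × ℝ^n → ℝ^p is not surjective, one has ψ(x) + φ(y) = 0. -/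
section Coprod

variable {R M M₁ M₂ : Type*} [Semiring R] [AddCommMonoid M] [Module R M] [TopologicalSpace M]
  [ContinuousAdd M] [AddCommMonoid M₁] [Module R M₁] [TopologicalSpace M₁]
  [AddCommMonoid M₂] [Module R M₂] [TopologicalSpace M₂]

theorem surjective_coprod_of_surjective_left {f₁ : M₁ →L[R] M} (hf₁ : Function.Surjective f₁)
    (f₂ : M₂ →L[R] M) : Function.Surjective (f₁.coprod f₂) := by
  rw [← f₁.coprod_comp_inl f₂, ContinuousLinearMap.coe_comp] at hf₁
  exact hf₁.of_comp

theorem surjective_coprod_of_surjective_right (f₁ : M₁ →L[R] M) {f₂ : M₂ →L[R] M}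
    (hf₂ : Function.Surjective f₂) : Function.Surjective (f₁.coprod f₂) := by
  rw [← f₁.coprod_comp_inr f₂, ContinuousLinearMap.coe_comp] at hf₂
  exact hf₂.of_comp

end Coprod

section SingularSet

variable {𝕜 E F G : Type*} [NontriviallyNormedField 𝕜]
  [NormedAddCommGroup E] [NormedSpace 𝕜 E] [NormedAddCommGroup F] [NormedSpace 𝕜 F]
  [NormedAddCommGroup G] [NormedSpace 𝕜 G]

variable (𝕜) in
/-- The singular locus `Sing f` of a map between normed spaces: the points where its Fréchet
derivative is not surjective. If the target is nontrivial, it contains every point where `f` is not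
differentiable, because `fderiv` is zero there. -/
def singularSet (f : E → G) : Set E :=
  {x | ¬ Function.Surjective (fderiv 𝕜 f x)}

theorem mem_singularSet {f : E → G} {x : E} :
    x ∈ singularSet 𝕜 f ↔ ¬ Function.Surjective (fderiv 𝕜 f x) :=
  Iff.rfl

variable {ψ : E → G} {φ : F → G}

theorem fderiv_fst_add_snd {q : E × F} (hψ : DifferentiableAt 𝕜 ψ q.1)
    (hφ : DifferentiableAt 𝕜 φ q.2) :
    fderiv 𝕜 (fun q : E × F => ψ q.1 + φ q.2) q = (fderiv 𝕜 ψ q.1).coprod (fderiv 𝕜 φ q.2) :=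
  ((hψ.hasFDerivAt.comp q hasFDerivAt_fst).add (hφ.hasFDerivAt.comp q hasFDerivAt_snd)).fderiv

theorem singularSet_fst_add_snd_subset_prod (hψ : Differentiable 𝕜 ψ) (hφ : Differentiable 𝕜 φ) :
    singularSet 𝕜 (fun q : E × F => ψ q.1 + φ q.2) ⊆ singularSet 𝕜 ψ ×ˢ singularSet 𝕜 φ := by
  intro q hq
  rw [mem_singularSet, fderiv_fst_add_snd (hψ q.1) (hφ q.2)] at hq
  exact ⟨fun hsurj => hq (surjective_coprod_of_surjective_left hsurj _),
    fun hsurj => hq (surjective_coprod_of_surjective_right _ hsurj)⟩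

theorem singular_locus_of_thom_sebastiani_sum_general
    (hψd : Differentiable 𝕜 ψ) (hφd : Differentiable 𝕜 φ)
    (hψ : singularSet 𝕜 ψ ⊆ ψ ⁻¹' {0}) (hφ : singularSet 𝕜 φ ⊆ φ ⁻¹' {0}) :
    singularSet 𝕜 (fun q : E × F => ψ q.1 + φ q.2) ⊆
      (fun q : E × F => ψ q.1 + φ q.2) ⁻¹' {0} := by
  intro q hq
  obtain ⟨hψq, hφq⟩ := singularSet_fst_add_snd_subset_prod hψd hφd hq
  have hψ_zero : ψ q.1 = 0 := hψ hψq
  have hφ_zero : φ q.2 = 0 := hφ hφq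
  simp [hψ_zero, hφ_zero]

end SingularSet

/-- Proposition 4.2, singular locus of a Thom–Sebastiani sum: if `Sing ψ ⊆ ψ⁻¹(0)` and
`Sing φ ⊆ φ⁻¹(0)`, then the sum in separate variables `h(x,y) = ψ(x) + φ(y)` satisfies
`Sing h ⊆ h⁻¹(0)`: whenever `Dh(x,y)` is not surjective, `ψ(x) + φ(y) = 0`. -/
theorem singular_locus_of_thom_sebastiani_sum
    (m n p : ℕ)
    (ψ : EuclideanSpace ℝ (Fin m) → EuclideanSpace ℝ (Fin p))
    (φ : EuclideanSpace ℝ (Fin n) → EuclideanSpace ℝ (Fin p))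
    (hψd : Differentiable ℝ ψ) (hφd : Differentiable ℝ φ)
    (hψ : ∀ x, ψ x ≠ 0 → Function.Surjective ⇑(fderiv ℝ ψ x))
    (hφ : ∀ y, φ y ≠ 0 → Function.Surjective ⇑(fderiv ℝ φ y))
    (x : EuclideanSpace ℝ (Fin m)) (y : EuclideanSpace ℝ (Fin n))
    (h : ¬ Function.Surjective
      ⇑(fderiv ℝ
        (fun q : EuclideanSpace ℝ (Fin m) × EuclideanSpace ℝ (Fin n) => ψ q.1 + φ q.2)
        (x, y))) :
    ψ x + φ y = 0 :=
  singular_locus_of_thom_sebastiani_sum_general hψd hφd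
    (fun x => not_imp_comm.1 (hψ x)) (fun y => not_imp_comm.1 (hφ y)) h
end

section
/- (Example 4.3, Thom (a_f)-regularity along V \ {0}.) Let f : ℝ³ → ℝ², f(x,y,z) = (y⁴ − z²·x² − x⁴, x·y), with V = f⁻¹(0) = {x = y = 0} and gradients ∇f₁(x,y,z) = (−2xz² − 4x³, 4y³, −2zx²), ∇f₂(x,y,z) = (y, x, 0). Then for every z₀ ∈ ℝ with z₀ ≠ 0, every sequence p_k ∈ ℝ³ with p_k ∉ V converging to (0,0,z₀), and every sequences a_k, b_k ∈ ℝ such that the normal vectors u_k := a_k•∇f₁(p_k) + b_k•∇f₂(p_k) satisfy ‖u_k‖ = 1 and u_k converges to a vector u ∈ ℝ³, the limit u is orthogonal to the tangent direction (0,0,1) of V, i.e. the third component of u is zero. (Equivalently, f satisfies the Thom (a_f)-regularity condition at V \ {0}.) -/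
/-!
The fields `v = (0, 0, z)` and `w = (x, -y, 0)` are both tangent to the level sets of `f₂ = xy`, so
a normal vector `u = a ∇f₁ + b ∇f₂` pairs with them through `a ∇f₁` alone, and
`|⟪v, ∇f₁⟫| = 2x²z² ≤ 2x²z² + 4x⁴ + 4y⁴ = |⟪w, ∇f₁⟫|` gives `|⟪v, u⟫| ≤ |⟪w, u⟫|`. As the
base point tends to `(0, 0, z₀)`, `w` tends to `0` while `u` stays bounded, so in the limit `z₀`
times the third component of `u` vanishes.
-/

open Filter Topology

section InnerProductSpace

variable {𝕜 E : Type*} [RCLike 𝕜] [SeminormedAddCommGroup E] [InnerProductSpace 𝕜 E]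

theorem inner_eq_zero_of_tendsto_of_isBigO {ι : Type*} {l : Filter ι} [l.NeBot]
    {u v w : ι → E} {u₀ v₀ : E}
    (hvw : (fun k ↦ inner 𝕜 (v k) (u k)) =O[l] fun k ↦ inner 𝕜 (w k) (u k))
    (hu : Tendsto u l (𝓝 u₀)) (hv : Tendsto v l (𝓝 v₀)) (hw : Tendsto w l (𝓝 0)) :
    inner 𝕜 v₀ u₀ = 0 := by
  have hwu : Tendsto (fun k ↦ inner 𝕜 (w k) (u k)) l (𝓝 0) := by
    simpa only [inner_zero_left] using hw.inner (𝕜 := 𝕜) hu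
  exact tendsto_nhds_unique (hv.inner hu) (hvw.trans_tendsto hwu)

theorem norm_inner_le_of_mem_span_pair {C : ℝ} {m n u v w : E}
    (hvn : inner 𝕜 v n = 0) (hwn : inner 𝕜 w n = 0)
    (hm : ‖inner 𝕜 v m‖ ≤ C * ‖inner 𝕜 w m‖) (hu : u ∈ Submodule.span 𝕜 {m, n}) :
    ‖inner 𝕜 v u‖ ≤ C * ‖inner 𝕜 w u‖ := by
  obtain ⟨a, b, rfl⟩ := Submodule.mem_span_pair.1 hu
  have inner_combination {t : E} (ht : inner 𝕜 t n = 0) :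
      inner 𝕜 t (a • m + b • n) = a * inner 𝕜 t m := by
    rw [inner_add_right, inner_smul_right, inner_smul_right, ht, mul_zero, add_zero]
  rw [inner_combination hvn, inner_combination hwn, norm_mul, norm_mul, mul_left_comm]
  gcongr

end InnerProductSpace

/-- The gradient of the first component `y⁴ - z²x² - x⁴` of `f`, with coordinates
`(x, y, z) = (p 0, p 1, p 2)`. -/
noncomputable def gradFst (p : EuclideanSpace ℝ (Fin 3)) : EuclideanSpace ℝ (Fin 3) :=
  !₂[-2 * p 0 * (p 2) ^ 2 - 4 * (p 0) ^ 3, 4 * (p 1) ^ 3, -2 * p 2 * (p 0) ^ 2]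

/-- The gradient of the second component `xy` of `f`. -/
noncomputable def gradSnd (p : EuclideanSpace ℝ (Fin 3)) : EuclideanSpace ℝ (Fin 3) :=
  !₂[p 1, p 0, 0]

/-- The span of the two gradients at `p`: the normal space of the fiber of `f` through `p` when
`p` is off the `z`-axis, and `⊥` when it is on it. -/
noncomputable def fiberNormalSpace (p : EuclideanSpace ℝ (Fin 3)) :
    Submodule ℝ (EuclideanSpace ℝ (Fin 3)) :=
  Submodule.span ℝ {gradFst p, gradSnd p}

/-- The vector field `(0, 0, z)`, along the tangent direction of the `z`-axis. -/
noncomputable def verticalField (p : EuclideanSpace ℝ (Fin 3)) : EuclideanSpace ℝ (Fin 3) :=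
  !₂[0, 0, p 2]

/-- The vector field `(x, -y, 0)`, which generates the hyperbolic rotations preserving `xy`. -/
noncomputable def hyperbolicField (p : EuclideanSpace ℝ (Fin 3)) : EuclideanSpace ℝ (Fin 3) :=
  !₂[p 0, -p 1, 0]

theorem inner_verticalField (p u : EuclideanSpace ℝ (Fin 3)) :
    inner ℝ (verticalField p) u = p 2 * u 2 := by
  simp [verticalField, PiLp.inner_apply, Fin.sum_univ_three, mul_comm]

theorem inner_hyperbolicField (p u : EuclideanSpace ℝ (Fin 3)) :
    inner ℝ (hyperbolicField p) u = p 0 * u 0 - p 1 * u 1 := by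
  simp [hyperbolicField, PiLp.inner_apply, Fin.sum_univ_three, mul_comm, sub_eq_add_neg]

theorem continuous_verticalField : Continuous verticalField := by
  unfold verticalField
  fun_prop

theorem continuous_hyperbolicField : Continuous hyperbolicField := by
  unfold hyperbolicField
  fun_prop

theorem hyperbolicField_eq_zero {p : EuclideanSpace ℝ (Fin 3)} (h₀ : p 0 = 0) (h₁ : p 1 = 0) :
    hyperbolicField p = 0 := by
  ext i
  fin_cases i <;> simp [hyperbolicField, h₀, h₁]

theorem inner_verticalField_gradSnd (p : EuclideanSpace ℝ (Fin 3)) :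
    inner ℝ (verticalField p) (gradSnd p) = 0 := by
  simp [inner_verticalField, gradSnd]

theorem inner_hyperbolicField_gradSnd (p : EuclideanSpace ℝ (Fin 3)) :
    inner ℝ (hyperbolicField p) (gradSnd p) = 0 := by
  simp [inner_hyperbolicField, gradSnd, mul_comm]

theorem inner_verticalField_gradFst (p : EuclideanSpace ℝ (Fin 3)) :
    inner ℝ (verticalField p) (gradFst p) = -(2 * (p 0 * p 2) ^ 2) := by
  simp only [inner_verticalField, gradFst, Matrix.cons_val]
  ring

theorem inner_hyperbolicField_gradFst (p : EuclideanSpace ℝ (Fin 3)) :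
    inner ℝ (hyperbolicField p) (gradFst p) =
      -(2 * (p 0 * p 2) ^ 2 + 4 * (p 0) ^ 4 + 4 * (p 1) ^ 4) := by
  simp only [inner_hyperbolicField, gradFst, Matrix.cons_val]
  ring

theorem norm_inner_verticalField_gradFst_le (p : EuclideanSpace ℝ (Fin 3)) :
    ‖inner ℝ (verticalField p) (gradFst p)‖ ≤ ‖inner ℝ (hyperbolicField p) (gradFst p)‖ := by
  rw [inner_verticalField_gradFst, inner_hyperbolicField_gradFst, norm_neg, norm_neg,
    Real.norm_of_nonneg (by positivity), Real.norm_of_nonneg (by positivity), add_assoc]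
  exact le_add_of_nonneg_right (by positivity)

theorem norm_inner_verticalField_le {p u : EuclideanSpace ℝ (Fin 3)}
    (hu : u ∈ fiberNormalSpace p) :
    ‖inner ℝ (verticalField p) u‖ ≤ 1 * ‖inner ℝ (hyperbolicField p) u‖ :=
  norm_inner_le_of_mem_span_pair (inner_verticalField_gradSnd p) (inner_hyperbolicField_gradSnd p)
    ((norm_inner_verticalField_gradFst_le p).trans_eq (one_mul _).symm) hu

theorem example_thom_regularity_general {ι : Type*} {l : Filter ι} [l.NeBot]
    {p u : ι → EuclideanSpace ℝ (Fin 3)} {p₀ u₀ : EuclideanSpace ℝ (Fin 3)}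
    (hx : p₀ 0 = 0) (hy : p₀ 1 = 0) (hz : p₀ 2 ≠ 0) (hp : Tendsto p l (𝓝 p₀))
    (hu : ∀ᶠ k in l, u k ∈ fiberNormalSpace (p k)) (hu₀ : Tendsto u l (𝓝 u₀)) :
    u₀ 2 = 0 := by
  have hvertical : Tendsto (fun k ↦ verticalField (p k)) l (𝓝 (verticalField p₀)) :=
    (continuous_verticalField.tendsto p₀).comp hp
  have hhyperbolic : Tendsto (fun k ↦ hyperbolicField (p k)) l (𝓝 0) :=
    hyperbolicField_eq_zero hx hy ▸ (continuous_hyperbolicField.tendsto p₀).comp hp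
  have horthogonal : inner ℝ (verticalField p₀) u₀ = 0 :=
    inner_eq_zero_of_tendsto_of_isBigO
      (.of_bound 1 (hu.mono fun _ ↦ norm_inner_verticalField_le)) hu₀ hvertical hhyperbolic
  rw [inner_verticalField] at horthogonal
  exact (mul_eq_zero.1 horthogonal).resolve_left hz

/-- Example 4.3, Thom `(a_f)`-regularity along `V \ {0}` for
`f(x,y,z) = (y⁴ − z²x² − x⁴, xy)`: along any sequence `p_k ∉ V` converging to
`(0,0,z₀)`, `z₀ ≠ 0`, every convergent sequence of unit normal vectors
`u_k = a_k ∇f₁(p_k) + b_k ∇f₂(p_k)` has limit orthogonal to the tangent direction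
`(0,0,1)` of `V`, i.e. its third component vanishes. -/
theorem example_thom_regularity
    (V : Set (EuclideanSpace ℝ (Fin 3)))
    (hV : V = {p : EuclideanSpace ℝ (Fin 3) | p 0 = 0 ∧ p 1 = 0})
    (g1 g2 : EuclideanSpace ℝ (Fin 3) → EuclideanSpace ℝ (Fin 3))
    (hg1 : ∀ p : EuclideanSpace ℝ (Fin 3), ∀ i : Fin 3,
      g1 p i = ![-2 * p 0 * (p 2) ^ 2 - 4 * (p 0) ^ 3, 4 * (p 1) ^ 3,
        -2 * p 2 * (p 0) ^ 2] i)
    (hg2 : ∀ p : EuclideanSpace ℝ (Fin 3), ∀ i : Fin 3, g2 p i = ![p 1, p 0, 0] i)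
    (z₀ : ℝ) (hz₀ : z₀ ≠ 0)
    (pt : EuclideanSpace ℝ (Fin 3)) (hpt : ∀ i : Fin 3, pt i = ![0, 0, z₀] i)
    (pk : ℕ → EuclideanSpace ℝ (Fin 3)) (hpk : ∀ k, pk k ∉ V)
    (hlim : Filter.Tendsto pk Filter.atTop (nhds pt))
    (a b : ℕ → ℝ) (u : ℕ → EuclideanSpace ℝ (Fin 3))
    (hu : ∀ k, u k = a k • g1 (pk k) + b k • g2 (pk k))
    (hnorm : ∀ k, ‖u k‖ = 1)
    (ulim : EuclideanSpace ℝ (Fin 3))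
    (hul : Filter.Tendsto u Filter.atTop (nhds ulim)) :
    ulim 2 = 0 := by
  obtain rfl : g1 = gradFst := funext fun p ↦ PiLp.ext (hg1 p)
  obtain rfl : g2 = gradSnd := funext fun p ↦ PiLp.ext (hg2 p)
  exact example_thom_regularity_general (hpt 0) (hpt 1) ((hpt 2).trans_ne hz₀) hlim
    (.of_forall fun k ↦ Submodule.mem_span_pair.2 ⟨a k, b k, (hu k).symm⟩) hul
end

section
/- Let ψ : ℝ^m → ℝ^p be differentiable at a point x with ψ(x) ≠ 0, and suppose the real Fréchet derivative Dψ(x) : ℝ^m → ℝ^p is surjective. Let θ(y) = ‖ψ(y)‖⁻¹ • ψ(y). Then the range of Dθ(x) equals the tangent space of the unit sphere at θ(x), namely range Dθ(x) = {w ∈ ℝ^p : ⟪w, ψ(x)⟫ = 0}. -/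
open scoped RealInnerProductSpace

/-! The derivative of `u ↦ u / ‖u‖` at `u ≠ 0` is `‖u‖⁻¹` times the orthogonal projection `P` onto
`uᗮ`, so by the chain rule the derivative of `ψ / ‖ψ‖` at `x` has range `P (range Dψ(x))`. As `P`
is onto `uᗮ` with kernel `ℝ u`, where `u = ψ x`, it maps every subspace that spans the whole space
together with `u` onto `uᗮ`. -/

open Submodule

theorem map_starProjection_orthogonal_of_sup_eq_top {𝕜 E : Type*} [RCLike 𝕜]
    [NormedAddCommGroup E] [InnerProductSpace 𝕜 E] {S K : Submodule 𝕜 E}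
    [K.HasOrthogonalProjection] (h : S ⊔ K = ⊤) :
    S.map Kᗮ.starProjection.toLinearMap = Kᗮ := by
  have hK : K.map Kᗮ.starProjection.toLinearMap = ⊥ := by
    rw [← LinearMap.le_ker_iff_map, ker_starProjection]
    exact K.le_orthogonal_orthogonal
  calc S.map Kᗮ.starProjection.toLinearMap
      = (S ⊔ K).map Kᗮ.starProjection.toLinearMap := by rw [Submodule.map_sup, hK, sup_bot_eq]
    _ = Kᗮ := by rw [h, Submodule.map_top, range_starProjection]

section Normalize

variable {E F : Type*} [NormedAddCommGroup E] [NormedSpace ℝ E]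
  [NormedAddCommGroup F] [InnerProductSpace ℝ F]

theorem hasStrictFDerivAt_norm {u : F} (hu : u ≠ 0) :
    HasStrictFDerivAt (fun v : F => ‖v‖) (‖u‖⁻¹ • innerSL ℝ u) u := by
  have hsqrt := (hasStrictFDerivAt_norm_sq u).sqrt (pow_ne_zero 2 (norm_ne_zero_iff.mpr hu))
  simp only [Real.sqrt_sq (norm_nonneg _)] at hsqrt
  refine hsqrt.congr_fderiv ?_
  ext v
  calc
    _ = 1 / (2 * ‖u‖) * (2 • ⟪u, v⟫) := rfl
    _ = ‖u‖⁻¹ * ⟪u, v⟫ := by rw [two_nsmul]; ring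

theorem hasStrictFDerivAt_normalize {u : F} (hu : u ≠ 0) :
    HasStrictFDerivAt NormedSpace.normalize (‖u‖⁻¹ • (ℝ ∙ u)ᗮ.starProjection) u := by
  have hnorm : ‖u‖ ≠ 0 := norm_ne_zero_iff.mpr hu
  have hinv := (hasStrictDerivAt_inv hnorm).comp_hasStrictFDerivAt u (hasStrictFDerivAt_norm hu)
  refine (hinv.smul (hasStrictFDerivAt_id u)).congr_fderiv ?_
  ext v
  calc
    _ = ‖u‖⁻¹ • v + (-(‖u‖ ^ 2)⁻¹ * (‖u‖⁻¹ * ⟪u, v⟫)) • u := rfl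
    _ = ‖u‖⁻¹ • (v - (⟪u, v⟫ / ‖u‖ ^ 2) • u) := by module
    _ = _ := by rw [smul_apply, starProjection_orthogonal_val, starProjection_singleton]; rfl

theorem range_fderiv_normalize_comp {ψ : E → F} {x : E} (hψ : DifferentiableAt ℝ ψ x)
    (hx : ψ x ≠ 0) :
    (fderiv ℝ (NormedSpace.normalize ∘ ψ) x).range
      = (fderiv ℝ ψ x).range.map (ℝ ∙ ψ x)ᗮ.starProjection.toLinearMap := by
  have hcomp := (hasStrictFDerivAt_normalize hx).hasFDerivAt.comp x hψ.hasFDerivAt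
  rw [hcomp.fderiv, ContinuousLinearMap.smul_comp, ContinuousLinearMap.toLinearMap_smul,
    LinearMap.range_smul _ _ (inv_ne_zero (norm_ne_zero_iff.mpr hx)),
    ContinuousLinearMap.toLinearMap_comp, LinearMap.range_comp]

theorem range_fderiv_normalized_eq_tangent_space_general {ψ : E → F} {x : E}
    (hdiff : DifferentiableAt ℝ ψ x) (hx : ψ x ≠ 0)
    (htrans : (fderiv ℝ ψ x).range ⊔ ℝ ∙ ψ x = ⊤) :
    Set.range (fderiv ℝ (fun y => ‖ψ y‖⁻¹ • ψ y) x) = {w : F | ⟪w, ψ x⟫ = 0} := by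
  have hrange : (fderiv ℝ (NormedSpace.normalize ∘ ψ) x).range = (ℝ ∙ ψ x)ᗮ := by
    rw [range_fderiv_normalize_comp hdiff hx, map_starProjection_orthogonal_of_sup_eq_top htrans]
  ext w
  exact (SetLike.ext_iff.mp hrange w).trans mem_orthogonal_singleton_iff_inner_left

end Normalize

/-- If `Dψ(x)` is surjective and `ψ x ≠ 0`, then the range of the derivative of
`θ = ψ/‖ψ‖` at `x` is the tangent space of the unit sphere at `θ x`, i.e.
`{w : ⟪w, ψ x⟫ = 0}`. -/
theorem range_fderiv_normalized_eq_tangent_space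
    (m p : ℕ) (ψ : EuclideanSpace ℝ (Fin m) → EuclideanSpace ℝ (Fin p))
    (x : EuclideanSpace ℝ (Fin m)) (hdiff : DifferentiableAt ℝ ψ x) (hx : ψ x ≠ 0)
    (hsurj : Function.Surjective ⇑(fderiv ℝ ψ x)) :
    Set.range ⇑(fderiv ℝ (fun y => ‖ψ y‖⁻¹ • ψ y) x)
      = {w : EuclideanSpace ℝ (Fin p) | ⟪w, ψ x⟫ = 0} := by
  refine range_fderiv_normalized_eq_tangent_space_general hdiff hx ?_
  rw [LinearMap.range_eq_top.mpr hsurj, top_sup_eq]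
end
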